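/- For every f ∈ H^{−1}(Ω) one has ‖(1 − P_h′) f‖_{(H²(Ω) ∩ H¹₀(Ω))′} ≲ h · min_{f_h ∈ 𝒫⁰(𝒯)} ‖f − f_h‖_{H^{−1}(Ω)}. -/

import Mathlib

/-!
Abstract framework for minimum residual finite element methods (MINRES FEM)
for the Poisson problem, following
"MINRES for second-order PDEs with singular data" by Führer, Heuer, Karkulik.

The Sobolev spaces on a bounded polytopal Lipschitz domain `Ω ⊂ ℝ^d`
(`d = 2, 3`), the interpolation scale of (dual) Sobolev norms, the weak
solution operator of the Poisson problem together with its regularity shift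
`s_Ω`, and the discrete spaces and (regularization) operators attached to a
shape-regular (quasi-uniform) simplicial mesh are axiomatized.
-/

noncomputable section

open scoped RealInnerProductSpace

/-- The functional-analytic setting of the Poisson problem with homogeneous
Dirichlet boundary conditions on a bounded polytopal Lipschitz domain
`Ω ⊂ ℝ^d` (`d = 2, 3`). -/
structure PoissonSetting where
  /-- the space dimension `d` -/
  d : ℕ
  dim_eq : d = 2 ∨ d = 3
  /-- `L²(Ω)` -/
  L2 : Type
  [instL2 : NormedAddCommGroup L2]
  [instL2i : InnerProductSpace ℝ L2]
  /-- `L²(Ω)^d` -/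
  L2v : Type
  [instL2v : NormedAddCommGroup L2v]
  [instL2vi : InnerProductSpace ℝ L2v]
  /-- `H¹₀(Ω)`, normed by `v ↦ ‖∇v‖` -/
  H10 : Type
  [instH10 : NormedAddCommGroup H10]
  [instH10s : NormedSpace ℝ H10]
  /-- the gradient `∇ : H¹₀(Ω) → L²(Ω)^d` -/
  grad : H10 →L[ℝ] L2v
  /-- the embedding `H¹₀(Ω) ⊆ L²(Ω)` -/
  inclH10 : H10 →L[ℝ] L2
  /-- `H¹₀(Ω)` carries the norm `‖∇ ⬝ ‖` -/
  norm_H10 : ∀ v : H10, ‖v‖ = ‖grad v‖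
  /-- `H(div; Ω)` -/
  Hdiv : Type
  [instHdiv : NormedAddCommGroup Hdiv]
  [instHdivs : NormedSpace ℝ Hdiv]
  /-- the divergence `div : H(div; Ω) → L²(Ω)` -/
  dvg : Hdiv →L[ℝ] L2
  /-- the embedding `H(div; Ω) ⊆ L²(Ω)^d` -/
  inclHdiv : Hdiv →L[ℝ] L2v
  /-- membership in the interpolation space `H^{-1+s}(Ω)` (for `s ∈ [0,1]`),
  viewed inside `H^{-1}(Ω) = (H¹₀(Ω))'` -/
  memHm : ℝ → (H10 →L[ℝ] ℝ) → Prop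
  /-- the `H^{-1+s}(Ω)`-norm on `H^{-1}(Ω) = (H¹₀(Ω))'` -/
  normHm : ℝ → (H10 →L[ℝ] ℝ) → ℝ
  /-- `H^{-1+0}(Ω) = H^{-1}(Ω)` is the full dual space -/
  memHm_zero : ∀ φ, memHm 0 φ
  /-- the `H^{-1+0}(Ω)`-norm is the dual norm
  `‖φ‖ = sup_{0≠v∈H¹₀(Ω)} ⟨φ,v⟩/‖∇v‖` -/
  normHm_zero : ∀ φ, normHm 0 φ = ‖φ‖
  /-- membership in `H^{1+s}(Ω) ∩ H¹₀(Ω)` -/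
  memH1p : ℝ → H10 → Prop
  /-- the `H^{1+s}(Ω)`-norm -/
  normH1p : ℝ → H10 → ℝ
  /-- membership in `H²(Ω) ∩ H¹₀(Ω)` -/
  memH2 : H10 → Prop
  /-- the `H²(Ω)`-norm -/
  normH2 : H10 → ℝ
  /-- the weak solution operator of `-Δu = f`, `u|_Γ = 0` -/
  solve : (H10 →L[ℝ] ℝ) → H10
  /-- weak formulation: `(∇(solve f), ∇v) = ⟨f, v⟩` for all `v ∈ H¹₀(Ω)` -/
  solve_spec : ∀ f v, ⟪grad (solve f) , grad v⟫ = f v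
  /-- the regularity shift `s_Ω` of the Poisson problem on `Ω` -/
  sOmega : ℝ
  sOmega_gt : 1/2 < sOmega
  sOmega_le : sOmega ≤ 1

attribute [instance] PoissonSetting.instL2 PoissonSetting.instL2i
  PoissonSetting.instL2v PoissonSetting.instL2vi PoissonSetting.instH10
  PoissonSetting.instH10s PoissonSetting.instHdiv PoissonSetting.instHdivs

namespace PoissonSetting

/-- `H^{-1}(Ω) := (H¹₀(Ω))'`, with the dual norm
`‖φ‖_{H^{-1}(Ω)} = sup_{0 ≠ v ∈ H¹₀(Ω)} ⟨φ, v⟩ / ‖∇v‖`. -/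
abbrev Hm1 (S : PoissonSetting) : Type := S.H10 →L[ℝ] ℝ

variable (S : PoissonSetting)

/-- a function `g ∈ L²(Ω)` viewed as an element of `H^{-1}(Ω)` (with `L²(Ω)`
as pivot space) -/
def toHm1 (g : S.L2) : S.Hm1 := (innerSL ℝ g).comp S.inclH10

/-- the `H¹(Ω)`-norm on `H¹₀(Ω)`: `‖v‖²_{H¹} = ‖v‖² + ‖∇v‖²` -/
def normH1 (v : S.H10) : ℝ := Real.sqrt (‖S.inclH10 v‖ ^ 2 + ‖S.grad v‖ ^ 2)

/-- the `H(div;Ω)`-norm: `‖τ‖²_{H(div)} = ‖τ‖² + ‖div τ‖²` -/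
def normHdiv (τ : S.Hdiv) : ℝ := Real.sqrt (‖S.inclHdiv τ‖ ^ 2 + ‖S.dvg τ‖ ^ 2)

/-- the norm of the dual space `(H²(Ω) ∩ H¹₀(Ω))'`, with `L²(Ω)` as pivot
space -/
def normH2dual (φ : S.Hm1) : ℝ :=
  sSup ((fun v => |φ v|) '' {v : S.H10 | S.memH2 v ∧ S.normH2 v ≤ 1})

/-- the regularity shift of the Poisson problem:
`‖u‖_{H^{1+s}(Ω)} ≲ ‖f‖_{H^{-1+s}(Ω)}` for all `0 ≤ s ≤ s_Ω` -/
def RegShift : Prop :=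
  ∃ C > 0, ∀ s, 0 ≤ s → s ≤ S.sOmega → ∀ f, S.memHm s f →
    S.memH1p s (S.solve f) ∧ S.normH1p s (S.solve f) ≤ C * S.normHm s f

/-- `Ω` is convex: the regularity shift is `s_Ω = 1` and the Poisson problem
is `H²(Ω)`-regular -/
def Convex : Prop :=
  S.sOmega = 1 ∧ ∃ C > 0, ∀ g : S.L2,
    S.memH2 (S.solve (S.toHm1 g)) ∧ S.normH2 (S.solve (S.toHm1 g)) ≤ C * ‖g‖

/-- the scale is anchored at `s = 1`: `H^{-1+1}(Ω) = L²(Ω)` with equal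
norms -/
def ScaleL2 : Prop :=
  ∀ g : S.L2, S.memHm 1 (S.toHm1 g) ∧ S.normHm 1 (S.toHm1 g) = ‖g‖

/-- `L²(Ω)` functions belong to every space `H^{-1+s}(Ω)`, `s ∈ [0,1]` -/
def MemScale : Prop :=
  ∀ s, 0 ≤ s → s ≤ 1 → ∀ g : S.L2, S.memHm s (S.toHm1 g)

end PoissonSetting

/-- A regular (shape-regular, quasi-uniform) simplicial mesh `𝒯` of `Ω`,
together with its discrete spaces and the associated quasi-interpolation and
regularization operators. -/
structure Mesh (S : PoissonSetting) where
  /-- the (maximal) mesh-size `h` -/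
  h : ℝ
  h_pos : 0 < h
  /-- the set `𝒱₀` of interior vertices of `𝒯` -/
  Vtx : Type
  [instVtx : Fintype Vtx]
  /-- the position of an interior vertex `z ∈ 𝒱₀` -/
  vertexPos : Vtx → Fin S.d → ℝ
  /-- the center of mass `s_z` of the vertex patch `ω(z)` -/
  patchCentroid : Vtx → Fin S.d → ℝ
  /-- the hat function `η_z` associated with an interior vertex `z` -/
  hat : Vtx → S.H10
  /-- the biorthogonal dual functions `ψ_z ∈ 𝒫¹(𝒯)`,
  `ψ_z|_{Ω(z)} = |Ω(z)|⁻¹((d+1)(d+2)η_z - (d+1))`, `supp ψ_z = Ω(z)` -/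
  psi : Vtx → S.L2
  /-- the characteristic function `χ_{Ω(z)}` of the vertex patch `Ω(z)` -/
  chiPatch : Vtx → S.L2
  /-- the patch volume `|Ω(z)|` -/
  volPatch : Vtx → ℝ
  volPatch_pos : ∀ z, 0 < volPatch z
  /-- piecewise constants `𝒫⁰(𝒯) ⊆ L²(Ω)` -/
  P0 : Submodule ℝ S.L2
  /-- the conforming space `𝒫¹(𝒯) ∩ H¹₀(Ω)` -/
  P1 : Submodule ℝ S.H10
  /-- the broken space `𝒫¹(𝒯) ⊆ L²(Ω)` of (discontinuous) piecewise affine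
  functions -/
  P1b : Submodule ℝ S.L2
  /-- the lowest-order Raviart–Thomas space `ℛ𝒯⁰(𝒯) ⊆ H(div;Ω)` -/
  RT0 : Submodule ℝ S.Hdiv
  /-- the `L²(Ω)`-orthogonal projection `Π_h⁰` onto `𝒫⁰(𝒯)` -/
  Pi0 : S.L2 →L[ℝ] S.L2
  Pi0_mem : ∀ g, Pi0 g ∈ P0
  Pi0_orth : ∀ g, ∀ p ∈ P0, ⟪g - Pi0 g , p⟫ = 0
  /-- the mesh-size weighted `L²(Ω)`-norm `g ↦ ‖h_𝒯 g‖` -/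
  normHT : S.L2 → ℝ
  normHT_nonneg : ∀ g, 0 ≤ normHT g
  normHT_le : ∀ g, normHT g ≤ h * ‖g‖
  /-- the piecewise (broken) gradient `∇_𝒯` on `𝒫¹(𝒯)` -/
  gradB : S.L2 →ₗ[ℝ] S.L2v
  /-- the quasi-interpolation operator
  `J_h : L²(Ω) → 𝒫¹(𝒯) ∩ H¹₀(Ω)`, `J_h v = Σ_{z∈𝒱₀} (v, ψ_z) η_z` -/
  Jh : S.L2 →ₗ[ℝ] S.H10
  Jh_mem : ∀ g, Jh g ∈ P1
  Jh_def : ∀ g, Jh g = ∑ z, ⟪g , psi z⟫ • hat z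
  /-- the bubble operator `B_h : L²(Ω) → H¹₀(Ω)`,
  `B_h v = Σ_{T∈𝒯} (v, χ_T) η_{b,T}` -/
  Bh : S.L2 →ₗ[ℝ] S.H10
  /-- the Fortin-type operator `P_h = J_h + B_h(1 - J_h)` -/
  Ph : S.L2 →ₗ[ℝ] S.H10
  Ph_def : ∀ g, Ph g = Jh g + Bh (g - S.inclH10 (Jh g))
  /-- the adjoint `P_h' : H^{-1}(Ω) → 𝒫¹(𝒯)` of `P_h` -/
  Ph' : (S.H10 →L[ℝ] ℝ) →ₗ[ℝ] S.L2
  Ph'_mem : ∀ φ, Ph' φ ∈ P1b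
  Ph'_adj : ∀ φ g, ⟪Ph' φ , g⟫ = φ (Ph g)
  /-- the quasi-interpolation projector `Π_h^div` onto `ℛ𝒯⁰(𝒯)` -/
  Pidiv : S.Hdiv →ₗ[ℝ] S.Hdiv
  Pidiv_mem : ∀ τ, Pidiv τ ∈ RT0
  /-- the commutativity property `div Π_h^div τ = Π_h⁰ div τ` -/
  Pidiv_comm : ∀ τ, S.dvg (Pidiv τ) = Pi0 (S.dvg τ)

attribute [instance] Mesh.instVtx

namespace Mesh

variable {S : PoissonSetting} (M : Mesh S)

/-- the regularization operator `Q_h = Π_h⁰ P_h'` -/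
def Qh (φ : S.Hm1) : S.L2 := M.Pi0 (M.Ph' φ)

/-- the mesh condition `s_z = z` for all interior vertices `z ∈ 𝒱₀` -/
def MeshCondition : Prop := ∀ z, M.patchCentroid z = M.vertexPos z

/-- `(u_h, σ_h)` is the first-order system least-squares (FOSLS) approximation
with load `g ∈ L²(Ω)`: it minimizes the least-squares functional
`‖∇v_h - τ_h‖² + ‖div τ_h + g‖²` over `W_h = (𝒫¹(𝒯) ∩ H¹₀(Ω)) × ℛ𝒯⁰(𝒯)`. -/
def IsFOSLS (g : S.L2) (uh : S.H10) (σh : S.Hdiv) : Prop :=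
  uh ∈ M.P1 ∧ σh ∈ M.RT0 ∧
  ∀ vh ∈ M.P1, ∀ τh ∈ M.RT0,
    ‖S.grad uh - S.inclHdiv σh‖ ^ 2 + ‖S.dvg σh + g‖ ^ 2 ≤
      ‖S.grad vh - S.inclHdiv τh‖ ^ 2 + ‖S.dvg τh + g‖ ^ 2

end Mesh

/-!
If `P_h'` fixes `f_h`, then `1 - P_h'` annihilates it, so `(1 - P_h') f = (1 - P_h') (f - f_h)`.
Tested against `v`, duality moves the operator onto the test function:
`⟨(1 - P_h') φ, v⟩ = ⟨φ, (1 - P_h) v⟩ ≤ ‖φ‖_{H^{-1}} ‖(1 - P_h) v‖_{H¹}`, and the power of `h` is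
gained from the `H²`-regularity of `v`.
-/

namespace PoissonSetting

variable (S : PoissonSetting)

theorem toHm1_apply (g : S.L2) (v : S.H10) : S.toHm1 g v = ⟪g, S.inclH10 v⟫ := rfl

theorem toHm1_sub (g₁ g₂ : S.L2) : S.toHm1 (g₁ - g₂) = S.toHm1 g₁ - S.toHm1 g₂ := by
  ext v
  simp [toHm1_apply, inner_sub_left]

theorem norm_le_normH1 (v : S.H10) : ‖v‖ ≤ S.normH1 v := by
  rw [S.norm_H10]
  exact Real.le_sqrt_of_sq_le (le_add_of_nonneg_left (sq_nonneg _))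

/-- The pointwise bound keeps the set under the real `sSup` in `normH2dual` bounded above, which
rules out the junk value `0` that `sSup` takes on unbounded sets. -/
theorem normH2dual_le_of_abs_le {φ : S.Hm1} {K : ℝ} (hK : 0 ≤ K)
    (hφ : ∀ v, S.memH2 v → |φ v| ≤ K * S.normH2 v) : S.normH2dual φ ≤ K := by
  refine Real.sSup_le ?_ hK
  rintro _ ⟨v, ⟨hv, hv_le_one⟩, rfl⟩
  exact (hφ v hv).trans (mul_le_of_le_one_right hK hv_le_one)

end PoissonSetting

namespace Mesh

variable {S : PoissonSetting} (M : Mesh S)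

theorem sub_toHm1_Ph'_apply (φ : S.Hm1) (v : S.H10) :
    (φ - S.toHm1 (M.Ph' φ)) v = φ (v - M.Ph (S.inclH10 v)) := by
  rw [sub_apply, S.toHm1_apply, M.Ph'_adj, map_sub]

theorem abs_sub_toHm1_Ph'_apply_le (φ : S.Hm1) (v : S.H10) :
    |(φ - S.toHm1 (M.Ph' φ)) v| ≤ ‖φ‖ * S.normH1 (v - M.Ph (S.inclH10 v)) := by
  rw [sub_toHm1_Ph'_apply, ← Real.norm_eq_abs]
  exact φ.le_opNorm_of_le (S.norm_le_normH1 _)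

theorem normH2dual_sub_toHm1_Ph'_le {K : ℝ} (hK : 0 ≤ K)
    (happrox : ∀ v, S.memH2 v → S.normH1 (v - M.Ph (S.inclH10 v)) ≤ K * S.normH2 v)
    (φ : S.Hm1) : S.normH2dual (φ - S.toHm1 (M.Ph' φ)) ≤ K * ‖φ‖ := by
  refine S.normH2dual_le_of_abs_le (by positivity) fun v hv => ?_
  calc |(φ - S.toHm1 (M.Ph' φ)) v|
      ≤ ‖φ‖ * S.normH1 (v - M.Ph (S.inclH10 v)) := M.abs_sub_toHm1_Ph'_apply_le φ v
    _ ≤ ‖φ‖ * (K * S.normH2 v) := by gcongr; exact happrox v hv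
    _ = K * ‖φ‖ * S.normH2 v := by ring

theorem sub_toHm1_Ph'_eq_of_fixed {g : S.L2} (hg : M.Ph' (S.toHm1 g) = g) (f : S.Hm1) :
    f - S.toHm1 (M.Ph' f) = f - S.toHm1 g - S.toHm1 (M.Ph' (f - S.toHm1 g)) := by
  rw [map_sub, hg, S.toHm1_sub, sub_sub_sub_cancel_right]

end Mesh

/-- **Lemma 3.3.**  For every `f ∈ H^{-1}(Ω)` one has
`‖(1 - P_h') f‖_{(H²(Ω) ∩ H¹₀(Ω))'} ≲ h · min_{f_h ∈ 𝒫⁰(𝒯)} ‖f - f_h‖_{H^{-1}(Ω)}`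
(the minimum over `f_h ∈ 𝒫⁰(𝒯)` is expressed by quantifying over all
`f_h ∈ 𝒫⁰(𝒯)`). -/
theorem PhAdj_dualH2_approx
    (S : PoissonSetting) {ι : Type} (Msh : ι → Mesh S)
    -- approximation property of the Fortin-type operator `P_h` (context):
    -- `‖(1 - P_h)v‖_{H¹(Ω)} ≲ h ‖v‖_{H²(Ω)}` for `v ∈ H²(Ω) ∩ H¹₀(Ω)`
    (hPh : ∃ C > 0, ∀ i, ∀ v : S.H10, S.memH2 v →
      S.normH1 (v - (Msh i).Ph (S.inclH10 v)) ≤ C * (Msh i).h * S.normH2 v)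
    -- idempotency of `P_h'` on piecewise constants (context)
    (hidem : ∀ i, ∀ g ∈ (Msh i).P0, (Msh i).Ph' (S.toHm1 g) = g) :
    ∃ C > 0, ∀ i, ∀ f : S.Hm1, ∀ fh ∈ (Msh i).P0,
      S.normH2dual (f - S.toHm1 ((Msh i).Ph' f)) ≤
        C * (Msh i).h * ‖f - S.toHm1 fh‖ := by
  obtain ⟨C, hC, happrox⟩ := hPh
  refine ⟨C, hC, fun i f fh hfh => ?_⟩
  have hK : 0 ≤ C * (Msh i).h := mul_nonneg hC.le (Msh i).h_pos.le
  rw [(Msh i).sub_toHm1_Ph'_eq_of_fixed (hidem i fh hfh) f]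
  exact (Msh i).normH2dual_sub_toHm1_Ph'_le hK (happrox i) (f - S.toHm1 fh)
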